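/- If H is a non-empty graph containing no pendant edges, then (1/2)·δ'(H) ≤ lim_{n→∞} rwsat(n, H)/n ≤ δ'(H). -/

import Mathlib

open SimpleGraph

/-- The edge-colored graph `(G, c)` contains a rainbow copy of `H`
passing through the edge `e`. -/
def IsRainbowCopyThrough {W V : Type*} (H : SimpleGraph W) (G : SimpleGraph V)
    (c : Sym2 V → ℕ) (e : Sym2 V) : Prop :=
  ∃ f : W → V, Function.Injective f ∧
    (∀ ⦃a b⦄, H.Adj a b → G.Adj (f a) (f b)) ∧
    (∀ ⦃a b a' b'⦄, H.Adj a b → H.Adj a' b' →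
      c s(f a, f b) = c s(f a', f b') → s(a, b) = s(a', b')) ∧
    ∃ a b, H.Adj a b ∧ e = s(f a, f b)

/-- The edge-colored graph `(G, c)` is weakly `H`-rainbow saturated: there is an
ordering `L` of the non-edges of `G` such that for every list `cs` of pairwise
distinct colors, adding the non-edges one at a time (the `i`-th one in color `cs i`)
always creates a new rainbow copy of `H` through the added edge. -/
def WeaklyRainbowSat {W V : Type*} [DecidableEq V] (H : SimpleGraph W)
    (G : SimpleGraph V) (c : Sym2 V → ℕ) : Prop :=
  ∃ L : List (Sym2 V), L.Nodup ∧ (∀ e, e ∈ L ↔ e ∈ Gᶜ.edgeSet) ∧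
    ∀ cs : List ℕ, cs.length = L.length → cs.Nodup →
      ∀ i : Fin L.length,
        IsRainbowCopyThrough H
          (G ⊔ SimpleGraph.fromEdgeSet {e | e ∈ L.take ((i : ℕ) + 1)})
          (((L.zip cs).take ((i : ℕ) + 1)).foldl
            (fun c' p => Function.update c' p.1 p.2) c)
          (L.get i)

/-- The weak rainbow saturation number `rwsat(n, H)`: the minimum number of edges
in a weakly `H`-rainbow saturated edge-colored graph on `n` vertices, where by
convention the value is `n.choose 2` if no such graph exists. -/
noncomputable def rwsat {W : Type*} (H : SimpleGraph W) (n : ℕ) : ℕ :=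
  sInf ({m | ∃ (G : SimpleGraph (Fin n)) (c : Sym2 (Fin n) → ℕ),
    WeaklyRainbowSat H G c ∧ G.edgeSet.ncard = m} ∪ {n.choose 2})

/-- `δ'(H)`: the minimum degree among vertices of nonzero degree. -/
noncomputable def minPosDeg {W : Type*} (H : SimpleGraph W) : ℕ :=
  sInf {d | ∃ v, (H.neighborSet v).ncard = d ∧ d ≠ 0}

/-- `A` is contained in `B` as a subgraph (there is an injective graph
homomorphism from `A` to `B`). -/
def ContainsCopy {α β : Type*} (A : SimpleGraph α) (B : SimpleGraph β) : Prop :=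
  ∃ f : α → β, Function.Injective f ∧ ∀ ⦃a b⦄, A.Adj a b → B.Adj (f a) (f b)

/-- The Turán number `ex(N, ℋ)` of the family `ℋ = {H - {u, v} : uv ∈ E(H)}`:
the maximum number of edges of an `N`-vertex graph containing no member of `ℋ`. -/
noncomputable def exFam {W : Type*} (H : SimpleGraph W) (N : ℕ) : ℕ :=
  sSup {m | ∃ G : SimpleGraph (Fin N),
    (∀ u v : W, H.Adj u v → ¬ ContainsCopy (H.induce ({u, v}ᶜ : Set W)) G) ∧
    G.edgeSet.ncard = m}

/-- `f(H)`: the smallest `n` such that for each `N ∈ {n-1, n}` one has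
`ex(N, ℋ) ≤ C(N,2) - 2N - 2`. -/
noncomputable def fH {W : Type*} (H : SimpleGraph W) : ℕ :=
  sInf {n | ∀ N ∈ ({n - 1, n} : Set ℕ),
    (exFam H N : ℤ) ≤ (N.choose 2 : ℤ) - 2 * N - 2}

/-- The coloring `c` is rainbow (injective) on the set `S` of edges. -/
def RainbowOn {V : Type*} (c : Sym2 V → ℕ) (S : Set (Sym2 V)) : Prop :=
  ∀ e₁ ∈ S, ∀ e₂ ∈ S, c e₁ = c e₂ → e₁ = e₂

/-!
Saturation is handled through a closure: a pair is *forced* if it is an edge, or if, whatever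
colors an adversary gives to the non-edges, it completes a rainbow copy of `H` with forced pairs.
Weak saturation means that every pair is forced.

Lower bound: let `v` have degree less than `δ = δ'(H)`. A copy of `H` through the first new edge
at `v` would use all the edges at `v`, and the adversary gives the new edge the color of an old one.
Since `δ ≥ 2` there is such an old edge, so nothing is forced at `v`. Hence all degrees are at least
`δ`.

Upper bound: join `δ` vertices to everything and a bounded number of vertices to a bounded set, with
all edges in distinct colors.

Existence of the limit: `rwsat H` is subadditive up to a constant, so Fekete's argument applies.
Two optimal graphs have linearly many edges, so each contains a bounded independent set of vertices
of bounded degree. Join these sets completely, together with their neighborhoods, giving the edge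
`ab` the color `ℓ a + ℓ b` modulo `δ`. The adversary can spoil only boundedly many of these edges
with each of the `δ` colors, so every vertex of the hubs still sees a rainbow star with `δ` edges
next to a large rainbow clique of forced pairs; at most one edge of the star clashes with a new
edge, which then replaces it.
-/

section RainbowCopies

variable {W V V' : Type*} {H : SimpleGraph W} {G G' : SimpleGraph V} {c c' : Sym2 V → ℕ}
  {e : Sym2 V}

theorem IsRainbowCopyThrough.mono (h : IsRainbowCopyThrough H G c e) (hG : G ≤ G')
    (hc : Set.EqOn c c' G.edgeSet) : IsRainbowCopyThrough H G' c' e := by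
  obtain ⟨f, hf, hadj, hrainbow, he⟩ := h
  refine ⟨f, hf, fun a b hab ↦ hG (hadj hab), fun a b a' b' hab hab' heq ↦ ?_, he⟩
  exact hrainbow hab hab' ((hc (hadj hab)).trans (heq.trans (hc (hadj hab')).symm))

theorem IsRainbowCopyThrough.mem_edgeSet (h : IsRainbowCopyThrough H G c e) : e ∈ G.edgeSet := by
  obtain ⟨f, -, hadj, -, a, b, hab, rfl⟩ := h
  exact hadj hab

theorem IsRainbowCopyThrough.map (φ : V ↪ V') {c : Sym2 V' → ℕ}
    (h : IsRainbowCopyThrough H G (c ∘ Sym2.map φ) e) :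
    IsRainbowCopyThrough H (G.map φ) c (e.map φ) := by
  obtain ⟨f, hf, hadj, hrainbow, a, b, hab, rfl⟩ := h
  refine ⟨φ ∘ f, φ.injective.comp hf, fun a b hab ↦ ?_, fun a b a' b' hab hab' heq ↦ ?_,
    a, b, hab, rfl⟩
  · exact (map_adj_apply ..).2 (hadj hab)
  · exact hrainbow hab hab' heq

end RainbowCopies

section ForcedPairs

variable {W V V' : Type*} {H : SimpleGraph W} {G : SimpleGraph V} {G' : SimpleGraph V'}
  {c : Sym2 V → ℕ} {c' : Sym2 V' → ℕ} {e : Sym2 V}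

/-- A complete record `χ` of the colors in a run of the saturation process on `(G, c)`: the edges
of `G` keep their color and the non-edges receive arbitrary distinct colors, which may coincide
with colors of `G`. -/
structure IsAdversarialExtension (G : SimpleGraph V) (c χ : Sym2 V → ℕ) : Prop where
  eqOn : Set.EqOn χ c G.edgeSet
  injOn : Set.InjOn χ Gᶜ.edgeSet

/-- The closure of the edge set of `(G, c)` under adding pairs that complete a rainbow copy of `H`
with the pairs obtained before, whatever the colors of the non-edges. Weak rainbow saturation says
that every pair is reached, see `weaklyRainbowSat_iff_rainbowForced`; unlike an ordering of the
non-edges, the closure can be handled by induction. -/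
inductive RainbowForced (H : SimpleGraph W) (G : SimpleGraph V) (c : Sym2 V → ℕ) : Sym2 V → Prop
  | of_mem {e : Sym2 V} (he : e ∈ G.edgeSet) : RainbowForced H G c e
  | of_rainbowCopy {e : Sym2 V} {S : Set (Sym2 V)} (hS : ∀ e' ∈ S, RainbowForced H G c e')
      (hcopy : ∀ χ, IsAdversarialExtension G c χ →
        IsRainbowCopyThrough H (fromEdgeSet (insert e S)) χ e) : RainbowForced H G c e

theorem RainbowForced.of_forall_extension
    (h : ∀ χ, IsAdversarialExtension G c χ → ∃ E : Set (Sym2 V),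
      (∀ e' ∈ E, e' ≠ e → RainbowForced H G c e') ∧ IsRainbowCopyThrough H (fromEdgeSet E) χ e) :
    RainbowForced H G c e := by
  refine .of_rainbowCopy (S := {e' | RainbowForced H G c e'}) (fun _ ↦ id) fun χ hχ ↦ ?_
  obtain ⟨E, hE, hcopy⟩ := h χ hχ
  exact hcopy.mono (fromEdgeSet_mono fun e' he' ↦ or_iff_not_imp_left.2 (hE e' he'))
    (Set.eqOn_refl ..)

theorem IsAdversarialExtension.comp_map (φ : G ↪g G') (hc : ∀ e ∈ G.edgeSet, c' (e.map φ) = c e)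
    {χ : Sym2 V' → ℕ} (hχ : IsAdversarialExtension G' c' χ) :
    IsAdversarialExtension G c (χ ∘ Sym2.map φ) where
  eqOn e he := (hχ.eqOn (φ.map_mem_edgeSet_iff.2 he)).trans (hc e he)
  injOn := hχ.injOn.comp (Sym2.map.injective φ.injective).injOn
    fun _ he ↦ (Embedding.complEquiv φ).map_mem_edgeSet_iff.2 he

theorem RainbowForced.map (φ : G ↪g G') (hc : ∀ e ∈ G.edgeSet, c' (e.map φ) = c e)
    (h : RainbowForced H G c e) : RainbowForced H G' c' (e.map φ) := by
  induction h with
  | of_mem he => exact .of_mem (φ.map_mem_edgeSet_iff.2 he)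
  | @of_rainbowCopy e S _ hcopy ih =>
    refine .of_rainbowCopy (S := Sym2.map φ '' S) (Set.forall_mem_image.2 ih) fun χ hχ ↦ ?_
    refine ((hcopy _ (hχ.comp_map φ hc)).map φ.toEmbedding).mono ?_ (Set.eqOn_refl ..)
    rw [← Set.image_insert_eq, map_le_iff_le_comap]
    intro u v huv
    exact (fromEdgeSet_adj _).2 ⟨⟨_, huv.1, rfl⟩, φ.injective.ne huv.2⟩

end ForcedPairs

section Saturation

theorem foldl_update_apply {α β : Type*} [DecidableEq α] (l : List α) (χ c : α → β) (a : α) :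
    l.foldl (fun c' b ↦ Function.update c' b (χ b)) c a = if a ∈ l then χ a else c a := by
  induction l generalizing c with
  | nil => simp
  | cons b l ih => by_cases hab : a = b <;> simp_all

theorem exists_map_eq_of_length_eq {α β : Type*} {l : List α} {l' : List β}
    (hl : l.Nodup) (hlen : l'.length = l.length) (c : α → β) :
    ∃ χ : α → β, l.map χ = l' ∧ ∀ a ∉ l, χ a = c a := by
  classical
  refine ⟨fun a ↦ l'.getD (l.idxOf a) (c a), List.ext_getElem (by simp [hlen]) fun i _ _ ↦ ?_,
    fun a ha ↦ by simp [List.idxOf_eq_length ha, hlen]⟩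
  grind [hl.idxOf_getElem]

variable {W V : Type*} {H : SimpleGraph W} {G : SimpleGraph V} {c : Sym2 V → ℕ}

/-- A sequence `L` of distinct non-edges that can be added to `(G, c)` one after another, each
completing a rainbow copy of `H` whatever its color. This is the initial part of an ordering as in
`WeaklyRainbowSat`, with the list of colors replaced by a coloring of all pairs. -/
structure IsForcingSequence (H : SimpleGraph W) (G : SimpleGraph V) (c : Sym2 V → ℕ)
    (L : List (Sym2 V)) : Prop where
  nodup : L.Nodup
  mem_compl : ∀ e ∈ L, e ∈ Gᶜ.edgeSet
  isRainbowCopyThrough : ∀ i (hi : i < L.length) χ, IsAdversarialExtension G c χ →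
    IsRainbowCopyThrough H (G ⊔ fromEdgeSet {e | e ∈ L.take (i + 1)}) χ L[i]

theorem IsForcingSequence.rainbowForced {L : List (Sym2 V)} (hL : IsForcingSequence H G c L) (i : ℕ)
    (hi : i < L.length) : RainbowForced H G c L[i] := by
  induction i using Nat.strong_induction_on with
  | _ i ih =>
    refine .of_forall_extension fun χ hχ ↦ ⟨G.edgeSet ∪ {e | e ∈ L.take (i + 1)}, ?_, ?_⟩
    · rintro e (he | he) hne
      · exact .of_mem he
      · obtain ⟨j, hj, rfl⟩ := List.mem_take_iff_getElem.1 he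
        exact ih j (by grind) _
    · rw [fromEdgeSet_union, fromEdgeSet_edgeSet]
      exact hL.isRainbowCopyThrough i hi χ hχ

theorem IsForcingSequence.concat {L : List (Sym2 V)} (hL : IsForcingSequence H G c L)
    {e : Sym2 V} (heL : e ∉ L) (heG : e ∈ Gᶜ.edgeSet)
    (h : ∀ χ, IsAdversarialExtension G c χ →
      IsRainbowCopyThrough H (G ⊔ fromEdgeSet (insert e {e' | e' ∈ L})) χ e) :
    IsForcingSequence H G c (L ++ [e]) where
  nodup := List.nodup_append.2 ⟨hL.nodup, List.nodup_singleton e, by grind⟩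
  mem_compl e' he' := by
    obtain he' | rfl := List.mem_append.1 he' |>.imp_right List.mem_singleton.1
    exacts [hL.mem_compl e' he', heG]
  isRainbowCopyThrough i hi χ hχ := by
    obtain hi' | rfl : i < L.length ∨ i = L.length := by grind
    · rw [List.getElem_append_left hi', List.take_append_of_le_length hi']
      exact hL.isRainbowCopyThrough i hi' χ hχ
    · convert h χ hχ using 3
      · ext e'
        grind
      · simp

theorem exists_isForcingSequence_forall_length_le [Finite V] (H : SimpleGraph W)
    (G : SimpleGraph V) (c : Sym2 V → ℕ) : ∃ L, IsForcingSequence H G c L ∧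
      ∀ L', IsForcingSequence H G c L' → L'.length ≤ L.length := by
  have := Fintype.ofFinite V
  have hbdd : BddAbove (List.length '' {L | IsForcingSequence H G c L}) :=
    ⟨Fintype.card (Sym2 V), Set.forall_mem_image.2 fun _ hL ↦ hL.nodup.length_le_card⟩
  have hnil : IsForcingSequence H G c [] := ⟨List.nodup_nil, by simp, by simp⟩
  obtain ⟨L, hL, hmax⟩ := Nat.sSup_mem ⟨_, Set.mem_image_of_mem List.length hnil⟩ hbdd
  exact ⟨L, hL, fun L' hL' ↦ hmax ▸ le_csSup hbdd (Set.mem_image_of_mem _ hL')⟩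

theorem RainbowForced.mem_of_maximal {L : List (Sym2 V)} (hL : IsForcingSequence H G c L)
    (hmax : ∀ L', IsForcingSequence H G c L' → L'.length ≤ L.length) {e : Sym2 V}
    (he : RainbowForced H G c e) (heG : e ∈ Gᶜ.edgeSet) : e ∈ L := by
  induction he with
  | @of_mem e he =>
    induction e with
    | _ u v => exact absurd he heG.2
  | @of_rainbowCopy e S _ hcopy ih =>
    by_contra heL
    have hlonger := hL.concat heL heG fun χ hχ ↦ (hcopy χ hχ).mono (fun u v huv ↦ ?_)
      (Set.eqOn_refl ..)
    · have := hmax _ hlonger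
      grind
    · by_cases hG : G.Adj u v
      · exact .inl hG
      · exact .inr ⟨huv.1.imp_right fun h ↦ ih _ h ⟨huv.2, hG⟩, huv.2⟩

theorem eqOn_foldl_update [DecidableEq V] (L : List (Sym2 V)) (k : ℕ) {χ : Sym2 V → ℕ}
    (hχ : Set.EqOn χ c G.edgeSet) :
    Set.EqOn (((L.zip (L.map χ)).take k).foldl (fun c' p ↦ Function.update c' p.1 p.2) c) χ
      (G ⊔ fromEdgeSet {e | e ∈ L.take k}).edgeSet := by
  rw [← List.map_prod_left_eq_zip, ← List.map_take, List.foldl_map]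
  intro e he
  rw [foldl_update_apply, ite_eq_left_iff]
  rw [edgeSet_sup, edgeSet_fromEdgeSet] at he
  exact fun heL ↦ (hχ (he.resolve_right fun h ↦ heL h.1)).symm

theorem weaklyRainbowSat_iff_exists_isForcingSequence [DecidableEq V] :
    WeaklyRainbowSat H G c ↔
      ∃ L, IsForcingSequence H G c L ∧ ∀ e ∈ Gᶜ.edgeSet, e ∈ L := by
  constructor
  · rintro ⟨L, hnodup, hmem, hL⟩
    refine ⟨L, ⟨hnodup, fun e ↦ (hmem e).1, fun i hi χ hχ ↦ ?_⟩, fun e ↦ (hmem e).2⟩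
    have hχL : (L.map χ).Nodup :=
      hnodup.map_on fun a ha b hb ↦ hχ.injOn ((hmem a).1 ha) ((hmem b).1 hb)
    exact (hL _ (List.length_map ..) hχL ⟨i, hi⟩).mono le_rfl (eqOn_foldl_update L _ hχ.eqOn)
  · rintro ⟨L, hL, hmem⟩
    refine ⟨L, hL.nodup, fun e ↦ ⟨hL.mem_compl e, hmem e⟩, fun cs hlen hcs i ↦ ?_⟩
    obtain ⟨χ, rfl, hχc⟩ := exists_map_eq_of_length_eq hL.nodup hlen c
    have hχ : IsAdversarialExtension G c χ :=
      ⟨fun e he ↦ hχc e fun heL ↦ Set.disjoint_left.1 (disjoint_edgeSet.2 disjoint_compl_right) he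
          (hL.mem_compl e heL),
        fun a ha b hb ↦ List.inj_on_of_nodup_map hcs (hmem a ha) (hmem b hb)⟩
    exact (hL.isRainbowCopyThrough i i.2 χ hχ).mono le_rfl (eqOn_foldl_update L _ hχ.eqOn).symm

theorem weaklyRainbowSat_iff_rainbowForced [Finite V] [DecidableEq V] :
    WeaklyRainbowSat H G c ↔ ∀ e ∈ Gᶜ.edgeSet, RainbowForced H G c e := by
  rw [weaklyRainbowSat_iff_exists_isForcingSequence]
  constructor
  · rintro ⟨L, hL, hmem⟩ e he
    obtain ⟨i, hi, rfl⟩ := List.getElem_of_mem (hmem e he)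
    exact hL.rainbowForced i hi
  · intro h
    obtain ⟨L, hL, hmax⟩ := exists_isForcingSequence_forall_length_le H G c
    exact ⟨L, hL, fun e he ↦ (h e he).mem_of_maximal hL hmax he⟩

end Saturation

section SaturationNumber

variable {W : Type*}

theorem rwsat_le_choose_two (H : SimpleGraph W) (n : ℕ) : rwsat H n ≤ n.choose 2 :=
  Nat.sInf_le (.inr rfl)

theorem rwsat_card_le_ncard_edgeSet {V : Type*} [Fintype V] {H : SimpleGraph W}
    {G : SimpleGraph V} {c : Sym2 V → ℕ} (h : ∀ e ∈ Gᶜ.edgeSet, RainbowForced H G c e) :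
    rwsat H (Fintype.card V) ≤ G.edgeSet.ncard := by
  classical
  let ψ := Iso.map (Fintype.equivFin V) G
  refine Nat.sInf_le (.inl ⟨_, c ∘ Sym2.map ψ.symm,
    weaklyRainbowSat_iff_rainbowForced.2 fun e he ↦ ?_, Set.ncard_congr' ψ.mapEdgeSet.symm⟩)
  obtain ⟨e, rfl⟩ : ∃ e', Sym2.map ψ e' = e := ⟨e.map ψ.symm, by simp [Sym2.map_map]⟩
  refine (h e ((Embedding.complEquiv ψ.toEmbedding).map_mem_edgeSet_iff.1 he)).map ψ.toEmbedding
    fun e _ ↦ ?_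
  induction e with
  | _ u v => simp

theorem exists_forall_rainbowForced_ncard_eq_rwsat (H : SimpleGraph W) (n : ℕ) :
    ∃ (G : SimpleGraph (Fin n)) (c : Sym2 (Fin n) → ℕ),
      (∀ e ∈ Gᶜ.edgeSet, RainbowForced H G c e) ∧ G.edgeSet.ncard = rwsat H n := by
  obtain ⟨G, c, hG, hcard⟩ | hn := Nat.sInf_mem (s := {m | ∃ (G : SimpleGraph (Fin n))
    (c : Sym2 (Fin n) → ℕ), WeaklyRainbowSat H G c ∧ G.edgeSet.ncard = m} ∪ {n.choose 2})
    ⟨_, .inr rfl⟩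
  · exact ⟨G, c, weaklyRainbowSat_iff_rainbowForced.1 hG, hcard⟩
  · refine ⟨⊤, 0, by simp, ?_⟩
    rw [rwsat, hn, Set.ncard_eq_toFinset_card', ← edgeFinset,
      card_edgeFinset_top_eq_card_choose_two, Fintype.card_fin]

end SaturationNumber

section MinPosDeg

variable {W : Type*} {H : SimpleGraph W}

theorem minPosDeg_le_ncard_neighborSet [Finite W] {a b : W} (hab : H.Adj a b) :
    minPosDeg H ≤ (H.neighborSet a).ncard :=
  Nat.sInf_le ⟨a, rfl, Set.ncard_ne_zero_of_mem hab⟩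

theorem exists_adj_ncard_neighborSet_eq_minPosDeg [Finite W] (hH : H.edgeSet.Nonempty) :
    ∃ x y, H.Adj x y ∧ (H.neighborSet x).ncard = minPosDeg H := by
  obtain ⟨⟨a, b⟩, hab⟩ := hH
  obtain ⟨x, hx, hpos⟩ := Nat.sInf_mem (s := {d | ∃ v, (H.neighborSet v).ncard = d ∧ d ≠ 0})
    ⟨_, a, rfl, Set.ncard_ne_zero_of_mem hab⟩
  obtain ⟨y, hxy⟩ := Set.nonempty_of_ncard_ne_zero (hx ▸ hpos)
  exact ⟨x, y, hxy, hx⟩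

theorem two_le_minPosDeg [Finite W] (hH : H.edgeSet.Nonempty)
    (hpend : ∀ u v, H.Adj u v → (H.neighborSet v).ncard ≠ 1) : 2 ≤ minPosDeg H := by
  obtain ⟨x, y, hxy, hx⟩ := exists_adj_ncard_neighborSet_eq_minPosDeg hH
  have hx1 := hpend y x hxy.symm
  have hx0 : (H.neighborSet x).ncard ≠ 0 := Set.ncard_ne_zero_of_mem hxy
  omega

end MinPosDeg

section LowerBound

variable {W V : Type*} {H : SimpleGraph W} {G : SimpleGraph V} {c : Sym2 V → ℕ} {e : Sym2 V}
  {u v : V} {δ : ℕ}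

theorem exists_isAdversarialExtension_apply_eq [Countable V] (c : Sym2 V → ℕ)
    (he : e ∉ G.edgeSet) (k : ℕ) : ∃ χ, IsAdversarialExtension G c χ ∧ χ e = k := by
  classical
  obtain ⟨g, hg⟩ := exists_injective_nat (Sym2 V)
  refine ⟨G.edgeSet.piecewise c (Equiv.swap (g e) k ∘ g), ⟨Set.piecewise_eqOn .., ?_⟩, ?_⟩
  · exact ((Equiv.injective _).comp hg).injOn.congr fun e' he' ↦ (Set.piecewise_eq_of_notMem _ _ _
      (Set.disjoint_right.1 (disjoint_edgeSet.2 disjoint_compl_right) he')).symm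
  · simp [he]

/-- A vertex of minimal degree `δ` has all its edges used by a copy through one of them. -/
theorem IsRainbowCopyThrough.injOn_neighborSet [Finite V] [Finite W]
    (hδ : ∀ ⦃a b⦄, H.Adj a b → δ ≤ (H.neighborSet a).ncard)
    (h : IsRainbowCopyThrough H G c s(v, u)) (hv : (G.neighborSet v).ncard ≤ δ) :
    δ ≤ (G.neighborSet v).ncard ∧ Set.InjOn (fun w ↦ c s(v, w)) (G.neighborSet v) := by
  obtain ⟨f, hf, hadj, hrainbow, a, b, hab, he⟩ := h
  wlog hva : v = f a generalizing a b
  · exact this b a hab.symm (he.trans Sym2.eq_swap) (by grind)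
  subst hva
  have hsub : f '' H.neighborSet a ⊆ G.neighborSet (f a) := Set.image_subset_iff.2 fun _ h ↦ hadj h
  have hcard : (f '' H.neighborSet a).ncard = (H.neighborSet a).ncard :=
    Set.ncard_image_of_injective _ hf
  have himage : f '' H.neighborSet a = G.neighborSet (f a) :=
    Set.eq_of_subset_of_ncard_le hsub (by grind)
  refine ⟨by grind, ?_⟩
  rw [← himage]
  rintro _ ⟨w, hw, rfl⟩ _ ⟨w', hw', rfl⟩ heq
  rw [Sym2.congr_right.1 (hrainbow hw hw' heq)]

theorem RainbowForced.mem_edgeSet_of_ncard_neighborSet_lt [Finite V] [Finite W]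
    (hδ : ∀ ⦃a b⦄, H.Adj a b → δ ≤ (H.neighborSet a).ncard) (hδ2 : 2 ≤ δ)
    (hv : (G.neighborSet v).ncard < δ) (h : RainbowForced H G c e) (hve : v ∈ e) :
    e ∈ G.edgeSet := by
  induction h with
  | of_mem he => exact he
  | @of_rainbowCopy e S _ hcopy ih =>
    by_contra he
    obtain ⟨u, rfl⟩ := hve
    set G' := fromEdgeSet (insert s(v, u) S)
    have hsub : G'.neighborSet v ⊆ insert u (G.neighborSet v) := fun w hw ↦
      hw.1.imp Sym2.congr_right.1 fun h ↦ ih _ h (Sym2.mem_mk_left v w)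
    have hG' : (G'.neighborSet v).ncard ≤ δ :=
      (Set.ncard_le_ncard hsub).trans ((Set.ncard_insert_le ..).trans hv)
    have huniv (χ : Sym2 V → ℕ) (hχ : IsAdversarialExtension G c χ) :=
      (hcopy χ hχ).injOn_neighborSet hδ hG'
    obtain ⟨χ₀, hχ₀, -⟩ := exists_isAdversarialExtension_apply_eq c he 0
    obtain ⟨w, hw, hwu⟩ := Set.exists_ne_of_one_lt_ncard (hδ2.trans (huniv χ₀ hχ₀).1) u
    have hvw : s(v, w) ∈ G.edgeSet := (hsub hw).resolve_left hwu
    obtain ⟨χ, hχ, hχe⟩ := exists_isAdversarialExtension_apply_eq c he (c s(v, w))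
    exact hwu ((huniv χ hχ).2 hw (hcopy χ hχ).mem_edgeSet ((hχ.eqOn hvw).trans hχe.symm))

theorem le_ncard_neighborSet_of_forall_rainbowForced [Finite V] [Finite W]
    (hδ : ∀ ⦃a b⦄, H.Adj a b → δ ≤ (H.neighborSet a).ncard) (hδ2 : 2 ≤ δ) (hV : δ < Nat.card V)
    (hG : ∀ e ∈ Gᶜ.edgeSet, RainbowForced H G c e) (v : V) : δ ≤ (G.neighborSet v).ncard := by
  by_contra! hv
  have hfull : insert v (G.neighborSet v) = Set.univ := by
    refine Set.eq_univ_of_forall fun u ↦ or_iff_not_imp_left.2 fun huv ↦ ?_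
    by_contra hG'
    exact hG' ((hG s(v, u) ⟨Ne.symm huv, hG'⟩).mem_edgeSet_of_ncard_neighborSet_lt hδ hδ2 hv
      (Sym2.mem_mk_left v u))
  have hcard := Set.ncard_insert_le v (G.neighborSet v)
  rw [hfull, Set.ncard_univ] at hcard
  omega

theorem minPosDeg_mul_le_two_mul_rwsat [Finite W] (hH : 2 ≤ minPosDeg H) {n : ℕ}
    (hn : minPosDeg H < n) : minPosDeg H * n ≤ 2 * rwsat H n := by
  classical
  obtain ⟨G, c, hG, hcard⟩ := exists_forall_rainbowForced_ncard_eq_rwsat H n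
  have hdeg (v : Fin n) : minPosDeg H ≤ G.degree v := by
    rw [← G.card_neighborSet_eq_degree, ← Nat.card_eq_fintype_card]
    exact le_ncard_neighborSet_of_forall_rainbowForced
      (fun _ _ ↦ minPosDeg_le_ncard_neighborSet) hH (by simpa) hG v
  calc minPosDeg H * n = ∑ _v : Fin n, minPosDeg H := by simp [mul_comm]
    _ ≤ ∑ v, G.degree v := Finset.sum_le_sum fun v _ ↦ hdeg v
    _ = 2 * rwsat H n := by
      rw [G.sum_degrees_eq_twice_card_edges, ← hcard, Set.ncard_eq_toFinset_card', edgeFinset]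

end LowerBound

section Apex

variable {W V : Type*} {H : SimpleGraph W} {χ : Sym2 V → ℕ} {E : Set (Sym2 V)}
  {x y : W} {p q : V} {D K : Finset V}

theorem exists_injOn_neighborSet [Finite W] (hxy : H.Adj x y) (hqD : q ∈ D)
    (hD : (H.neighborSet x).ncard ≤ D.card) :
    ∃ f : W → V, Set.InjOn f (H.neighborSet x) ∧ Set.MapsTo f (H.neighborSet x) D ∧ f y = q := by
  classical
  have : Nonempty V := ⟨q⟩
  obtain ⟨f, hfD, hf⟩ :=
    (Set.toFinite (H.neighborSet x)).exists_injOn_of_encard_le (t := (D : Set V)) (by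
      rwa [Set.encard_coe_eq_coe_finsetCard, ← (Set.toFinite _).cast_ncard_eq, Nat.cast_le])
  have hfy : f y ∈ D := hfD hxy
  refine ⟨Equiv.swap (f y) q ∘ f, (Equiv.injective _).comp_injOn hf, fun z hz ↦ ?_,
    Equiv.swap_apply_left ..⟩
  have hfz : f z ∈ D := hfD hz
  grind

theorem exists_injective_of_adj [Fintype W] (hxy : H.Adj x y) (hp : p ∉ K) (hDK : D ⊆ K)
    (hqD : q ∈ D) (hD : (H.neighborSet x).ncard ≤ D.card) (hK : Fintype.card W ≤ K.card + 1) :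
    ∃ f : W → V, Function.Injective f ∧ f x = p ∧ f y = q ∧ (∀ z, H.Adj x z → f z ∈ D) ∧
      ∀ z ≠ x, f z ∈ K := by
  classical
  obtain ⟨f, hf, hfD, hfy⟩ := exists_injOn_neighborSet hxy hqD hD
  have hx : x ∉ H.neighborFinset x := by simp
  have hcard : ((H.neighborFinset x).image f).card ≤ Fintype.card W - 1 :=
    Finset.card_image_le.trans (Nat.le_sub_one_of_lt (H.degree_lt_card_verts x))
  obtain ⟨K', hfK', hK'K, hK'⟩ := Finset.exists_subsuperset_card_eq
    (Finset.image_subset_iff.2 fun z hz ↦ hDK (hfD ((H.mem_neighborFinset ..).1 hz)))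
    hcard (Nat.sub_le_iff_le_add.2 hK)
  have hpK' : p ∉ K' := fun h ↦ hp (hK'K h)
  have hW : Fintype.card W = (insert p K').card := by
    rw [Finset.card_insert_of_notMem hpK', hK', Nat.sub_add_cancel (Fintype.card_pos_iff.2 ⟨x⟩)]
  have hf₁ : Set.EqOn (Function.update f x p) f (H.neighborFinset x) := fun z hz ↦
    Function.update_of_ne (by grind) ..
  have hf₁K' : (H.neighborFinset x).image (Function.update f x p) ⊆ K' := by
    rwa [Finset.image_congr hf₁]
  obtain ⟨g, hg⟩ := Finset.exists_equiv_extend_of_card_eq hW (s := insert x (H.neighborFinset x))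
    (f := Function.update f x p) (by
      rw [Finset.image_insert, Function.update_self]
      exact Finset.insert_subset_insert p hf₁K') (by
      rw [Finset.coe_insert, Set.injOn_insert (by simp), Function.update_self]
      refine ⟨(hf.mono (by simp)).congr hf₁.symm, fun hpf ↦ hpK' (hf₁K' (by simpa using hpf))⟩)
  have hgx : (g x : V) = p := by simp [hg]
  have hgf (z : W) (hz : H.Adj x z) : (g z : V) = f z := by simp [hg, hz, hz.ne']
  refine ⟨fun z ↦ g z, Subtype.val_injective.comp g.injective, hgx, (hgf y hxy).trans hfy,
    fun z hz ↦ Set.mem_of_eq_of_mem (hgf z hz) (hfD hz), fun z hz ↦ hK'K ?_⟩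
  refine (Finset.mem_insert.1 (g z).2).resolve_left fun hgz ↦ hz ?_
  exact g.injective (Subtype.ext (hgz.trans hgx.symm))

theorem isRainbowCopyThrough_of_apex [Fintype W] (hxy : H.Adj x y) (hp : p ∉ K) (hDK : D ⊆ K)
    (hqD : q ∈ D) (hD : (H.neighborSet x).ncard ≤ D.card) (hK : Fintype.card W ≤ K.card + 1)
    (hχ : Set.InjOn χ E) (hDE : ∀ d ∈ D, s(p, d) ∈ E)
    (hKE : ∀ u ∈ K, ∀ v ∈ K, u ≠ v → s(u, v) ∈ E) :
    IsRainbowCopyThrough H (fromEdgeSet E) χ s(p, q) := by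
  obtain ⟨f, hf, rfl, rfl, hfD, hfK⟩ := exists_injective_of_adj hxy hp hDK hqD hD hK
  have hE {a b : W} (hab : H.Adj a b) : s(f a, f b) ∈ E := by
    by_cases ha : a = x
    · exact ha ▸ hDE _ (hfD b (ha ▸ hab))
    by_cases hb : b = x
    · exact hb ▸ Sym2.eq_swap ▸ hDE _ (hfD a (hb ▸ hab.symm))
    exact hKE _ (hfK a ha) _ (hfK b hb) (hf.ne hab.ne)
  exact ⟨f, hf, fun a b hab ↦ ⟨hE hab, hf.ne hab.ne⟩,
    fun a b a' b' hab hab' heq ↦ Sym2.map.injective hf (hχ (hE hab) (hE hab') heq), x, y, hxy, rfl⟩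

theorem exists_blocking_finset [Finite V] (hχ : Set.InjOn χ E) (hE : ∀ e ∈ E, ¬ e.IsDiag)
    (p q : V) (B : Finset ℕ) : ∃ Z : Finset V, Z.card ≤ B.card ∧ p ∉ Z ∧ q ∉ Z ∧
      ∀ e ∈ E, e ≠ s(p, q) → χ e ∈ B → ∃ z ∈ Z, z ∈ e := by
  classical
  have := Fintype.ofFinite V
  let F : Finset (Sym2 V) := {e | e ∈ E ∧ e ≠ s(p, q) ∧ χ e ∈ B}
  have hF : ∀ e ∈ F, ∃ z ∈ e, z ∉ s(p, q) := by
    intro e he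
    obtain ⟨heE, hne, -⟩ := (Finset.mem_filter_univ e).1 he
    by_contra! h
    induction e with
    | _ a b =>
      exact hne ((Sym2.mem_and_mem_iff (hE _ heE)).1
        ⟨h a (Sym2.mem_mk_left a b), h b (Sym2.mem_mk_right a b)⟩).symm
  have : Nonempty V := ⟨p⟩
  choose! z hze hzpq using hF
  refine ⟨F.image z, Finset.card_image_le.trans (Finset.card_le_card_of_injOn χ ?_ ?_), ?_, ?_, ?_⟩
  · exact fun e he ↦ ((Finset.mem_filter_univ e).1 he).2.2
  · exact hχ.mono fun e he ↦ ((Finset.mem_filter_univ e).1 he).1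
  · grind
  · grind
  · intro e he hne hB
    have heF : e ∈ F := (Finset.mem_filter_univ e).2 ⟨he, hne, hB⟩
    exact ⟨z e, Finset.mem_image_of_mem z heF, hze e heF⟩

end Apex

section ForcingTools

open scoped Finset

variable {W V : Type*} [Fintype W] {H : SimpleGraph W} {G : SimpleGraph V} {c : Sym2 V → ℕ}
  {x y : W} {p q : V}

theorem RainbowForced.of_isIndepSet {K : Finset V} (hxy : H.Adj x y) (hKG : G.IsIndepSet K)
    (hKW : Fintype.card W ≤ K.card) (hp : p ∈ K) (hq : q ∈ K) (hpq : p ≠ q)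
    (hK : ∀ u ∈ K, ∀ v ∈ K, u ≠ v → s(u, v) ≠ s(p, q) → RainbowForced H G c s(u, v)) :
    RainbowForced H G c s(p, q) := by
  classical
  refine .of_forall_extension fun χ hχ ↦ ⟨{e ∈ Gᶜ.edgeSet | ∀ v ∈ e, v ∈ K}, ?_, ?_⟩
  · rintro ⟨u, v⟩ ⟨⟨huv, -⟩, he⟩ hne
    exact hK u (he u (Sym2.mem_mk_left u v)) v (he v (Sym2.mem_mk_right u v)) huv hne
  · have hKE : ∀ u ∈ K, ∀ v ∈ K, u ≠ v → s(u, v) ∈ {e ∈ Gᶜ.edgeSet | ∀ v ∈ e, v ∈ K} :=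
      fun u hu v hv huv ↦ ⟨⟨huv, hKG hu hv huv⟩, Sym2.ball.2 ⟨hu, hv⟩⟩
    have hcard := Finset.card_erase_add_one hp
    have hx : (H.neighborSet x).ncard < Fintype.card W := by
      rw [← Nat.card_eq_fintype_card, ← Set.ncard_univ]
      exact Set.ncard_lt_ncard (Set.ssubset_univ_iff.2 ((Set.ne_univ_iff_exists_notMem _).2
        ⟨x, H.loopless.irrefl x⟩))
    refine isRainbowCopyThrough_of_apex (D := K.erase p) (K := K.erase p) hxy (by simp) subset_rfl
      (by grind) (by grind) (by grind) (hχ.injOn.mono (Set.sep_subset ..)) ?_ ?_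
    · exact fun d hd ↦ hKE p hp d (Finset.mem_of_mem_erase hd) (Finset.ne_of_mem_erase hd).symm
    · exact fun u hu v hv ↦ hKE u (Finset.mem_of_mem_erase hu) v (Finset.mem_of_mem_erase hv)

theorem exists_transversal {δ k : ℕ} {T Z : Finset V} {ℓ : V → ZMod δ} (hZ : #Z < k)
    (hT : ∀ j, k ≤ #{t ∈ T | ℓ t = j}) :
    ∃ r : ZMod δ → V, ∀ j, r j ∈ T ∧ r j ∉ Z ∧ ℓ (r j) = j := by
  classical
  suffices h : ∀ j, ∃ t ∈ T, t ∉ Z ∧ ℓ t = j from Classical.skolem.1 h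
  intro j
  by_contra! h
  have hjZ : {t ∈ T | ℓ t = j} ⊆ Z := by grind
  exact (hZ.trans_le (hT j)).not_ge (Finset.card_le_card hjZ)

theorem injOn_star_union {δ : ℕ} [NeZero δ] {χ : Sym2 V → ℕ} {r : ZMod δ → V} {E : Set (Sym2 V)}
    {k : ZMod δ} (hE : Set.InjOn χ E) (hr : ∀ j, χ s(p, r j) = j.val)
    (hk : ∀ e ∈ E, χ e < δ → χ e = k) : Set.InjOn χ ((fun j ↦ s(p, r j)) '' {k}ᶜ ∪ E) := by
  have hcross : ∀ j ∈ ({k}ᶜ : Set (ZMod δ)), ∀ e ∈ E, χ s(p, r j) ≠ χ e := by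
    intro j hj e he heq
    rw [hr] at heq
    have hjk := hk e he (heq ▸ j.val_lt)
    rw [← heq, ZMod.natCast_zmod_val] at hjk
    exact hj hjk
  refine (Set.injOn_union (Set.disjoint_left.2 ?_)).2 ⟨?_, hE, Set.forall_mem_image.2 hcross⟩
  · exact Set.forall_mem_image.2 fun j hj he ↦ hcross j hj _ he rfl
  · rintro _ ⟨j, -, rfl⟩ _ ⟨j', -, rfl⟩ heq
    rw [ZMod.val_injective δ ((hr j).symm.trans (heq.trans (hr j')))]

/-- At most one of the `δ` edges `p (r j)` has the color of `p q`. Replacing this edge by `p q`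
gives a vertex `p` of degree `δ` in a rainbow graph. -/
theorem isRainbowCopyThrough_of_star {δ : ℕ} {χ : Sym2 V → ℕ} {r : ZMod δ → V} {K : Finset V}
    {E : Set (Sym2 V)} (hxy : H.Adj x y) (hx : (H.neighborSet x).ncard = δ)
    (hr : Function.Injective r) (hrK : ∀ j, r j ∈ K) (hqr : ∀ j, r j ≠ q)
    (hpr : ∀ j, χ s(p, r j) = j.val) (hp : p ∉ K) (hq : q ∈ K) (hKW : Fintype.card W ≤ #K + 1)
    (hχ : Set.InjOn χ E) (hKE : ∀ u ∈ K, ∀ v ∈ K, u ≠ v → s(u, v) ∈ E) (hpqE : s(p, q) ∈ E)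
    (hE : ∀ e ∈ E, χ e < δ → e = s(p, q)) :
    IsRainbowCopyThrough H (fromEdgeSet (Set.range (fun j ↦ s(p, r j)) ∪ E)) χ s(p, q) := by
  classical
  have : NeZero δ := ⟨hx ▸ Set.ncard_ne_zero_of_mem hxy⟩
  let k : ZMod δ := χ s(p, q)
  let D := insert q ((Finset.univ.erase k).image r)
  have hDK : D ⊆ K := Finset.insert_subset hq (Finset.image_subset_iff.2 fun j _ ↦ hrK j)
  have hD : #D = δ := by
    rw [Finset.card_insert_of_notMem (by grind), Finset.card_image_of_injective _ hr,
      Finset.card_erase_add_one (Finset.mem_univ k), Finset.card_univ, ZMod.card]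
  have hinj : Set.InjOn χ ((fun j ↦ s(p, r j)) '' {k}ᶜ ∪ E) :=
    injOn_star_union hχ hpr fun e he heδ ↦ by rw [hE e he heδ]
  refine (isRainbowCopyThrough_of_apex hxy hp hDK (Finset.mem_insert_self ..) (by omega) hKW hinj
    (fun d hd ↦ ?_) fun u hu v hv huv ↦ .inr (hKE u hu v hv huv)).mono
    (fromEdgeSet_mono (Set.union_subset_union_left E (Set.image_subset_range ..)))
    (Set.eqOn_refl ..)
  obtain rfl | hd := Finset.mem_insert.1 hd
  · exact .inr hpqE
  · obtain ⟨j, hj, rfl⟩ := Finset.mem_image.1 hd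
    exact .inl ⟨j, (Finset.mem_erase.1 hj).1, rfl⟩

theorem IsAdversarialExtension.isRainbowCopyThrough_of_colorClasses [Finite V] {δ : ℕ}
    {T : Finset V} {ℓ : V → ZMod δ} {χ : Sym2 V → ℕ} (hχ : IsAdversarialExtension G c χ)
    (hxy : H.Adj x y) (hx : (H.neighborSet x).ncard = δ)
    (hT : ∀ j, δ + Fintype.card W ≤ #{t ∈ T | ℓ t = j})
    (hpT : ∀ t ∈ T, G.Adj p t ∧ c s(p, t) = (ℓ t).val) (hpq : Gᶜ.Adj p q)
    (hqT : G.IsIndepSet (insert q (T : Set V))) :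
    IsRainbowCopyThrough H (fromEdgeSet (G.edgeSet ∪
      {e ∈ Gᶜ.edgeSet | e = s(p, q) ∨ ∀ v ∈ e, v ∈ insert q (T : Set V)})) χ s(p, q) := by
  classical
  have hW : 0 < Fintype.card W := Fintype.card_pos_iff.2 ⟨x⟩
  obtain ⟨Z, hZδ, -, hqZ, hZ⟩ := exists_blocking_finset hχ.injOn
    (fun e he ↦ not_isDiag_of_mem_edgeSet _ he) p q (Finset.range δ)
  rw [Finset.card_range] at hZδ
  obtain ⟨r, hr⟩ := exists_transversal (by omega : #Z < δ + Fintype.card W) hT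
  have hrG (j : ZMod δ) : G.Adj p (r j) ∧ c s(p, r j) = j.val := by
    simpa [hr] using hpT (r j) (hr j).1
  let K := insert q (T \ Z)
  let E := {e ∈ Gᶜ.edgeSet | e = s(p, q) ∨ ∀ v ∈ e, v ∈ K}
  have hqT' : q ∉ T := fun h ↦ hpq.2 (hpT q h).1
  have hpT' : p ∉ T := fun h ↦ G.irrefl (hpT p h).1
  have hKW : Fintype.card W ≤ #K + 1 := by
    have := (hT 0).trans (Finset.card_filter_le ..)
    have := Finset.le_card_sdiff Z T
    grind
  have hEδ : ∀ e ∈ E, χ e < δ → e = s(p, q) := by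
    rintro e ⟨heG, he⟩ heδ
    by_contra hne
    obtain ⟨z, hz, hze⟩ := hZ e heG hne (Finset.mem_range.2 heδ)
    grind
  refine (isRainbowCopyThrough_of_star (K := K) (E := E) hxy hx
    (Function.LeftInverse.injective (g := ℓ) fun j ↦ (hr j).2.2) (by grind) (by grind)
    (fun j ↦ (hχ.eqOn (hrG j).1).trans (hrG j).2) (by grind [hpq.ne]) (Finset.mem_insert_self ..)
    hKW (hχ.injOn.mono (Set.sep_subset ..)) (fun u hu v hv huv ↦ ?_) ⟨hpq, .inl rfl⟩ hEδ).mono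
    (fromEdgeSet_mono (Set.union_subset_union ?_ fun e he ↦ ?_)) (Set.eqOn_refl ..)
  · exact ⟨⟨huv, hqT (by grind) (by grind) huv⟩, .inr (Sym2.ball.2 ⟨hu, hv⟩)⟩
  · exact Set.range_subset_iff.2 fun j ↦ (hrG j).1
  · exact ⟨he.1, he.2.imp_right fun h v hv ↦ by grind⟩

theorem RainbowForced.of_colorClasses [Finite V] {δ : ℕ} {T : Finset V} {ℓ : V → ZMod δ}
    (hxy : H.Adj x y) (hx : (H.neighborSet x).ncard = δ)
    (hT : ∀ j, δ + Fintype.card W ≤ #{t ∈ T | ℓ t = j})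
    (hpT : ∀ t ∈ T, G.Adj p t ∧ c s(p, t) = (ℓ t).val) (hpq : Gᶜ.Adj p q)
    (hqT : G.IsIndepSet (insert q (T : Set V)))
    (hforced : ∀ u ∈ insert q (T : Set V), ∀ v ∈ insert q (T : Set V), u ≠ v →
      RainbowForced H G c s(u, v)) :
    RainbowForced H G c s(p, q) := by
  refine .of_forall_extension fun χ hχ ↦
    ⟨_, ?_, hχ.isRainbowCopyThrough_of_colorClasses hxy hx hT hpT hpq hqT⟩
  rintro ⟨u, v⟩ (he | ⟨⟨huv, -⟩, he | he⟩) hne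
  · exact .of_mem he
  · exact absurd he hne
  · exact hforced u (he u (Sym2.mem_mk_left u v)) v (he v (Sym2.mem_mk_right u v)) huv

end ForcingTools

section UpperBound

open scoped Finset

variable {W V : Type*} [Fintype W] {H : SimpleGraph W} {G : SimpleGraph V} {c : Sym2 V → ℕ}
  {x y : W} {p q : V} {D K M : Finset V}

theorem RainbowForced.of_isClique [Finite V] (hxy : H.Adj x y) (hc : Set.InjOn c G.edgeSet)
    (hDK : D ⊆ K) (hD : (H.neighborSet x).ncard ≤ #D) (hK : Fintype.card W ≤ #K)
    (hqK : G.IsClique (insert q (K : Set V))) (hp : p ∉ K) (hpD : ∀ d ∈ D, G.Adj p d)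
    (hpq : Gᶜ.Adj p q) : RainbowForced H G c s(p, q) := by
  classical
  refine .of_forall_extension fun χ hχ ↦ ⟨insert s(p, q) {e ∈ G.edgeSet | χ e ≠ χ s(p, q)},
    fun e he hne ↦ .of_mem (he.resolve_left hne).1, ?_⟩
  have hχG : Set.InjOn χ G.edgeSet := hc.congr hχ.eqOn.symm
  obtain ⟨Z, hZcard, hpZ, hqZ, hZ⟩ := exists_blocking_finset hχG
    (fun e he ↦ not_isDiag_of_mem_edgeSet _ he) p q {χ s(p, q)}
  rw [Finset.card_singleton] at hZcard
  have hmem (a b : V) (hab : G.Adj a b) (ha : a ∉ Z) (hb : b ∉ Z) :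
      s(a, b) ∈ {e ∈ G.edgeSet | χ e ≠ χ s(p, q)} := by
    refine ⟨hab, fun heq ↦ ?_⟩
    obtain ⟨z, hz, hzab⟩ := hZ _ hab (fun h ↦ hpq.2 (h ▸ hab : s(p, q) ∈ G.edgeSet))
      (Finset.mem_singleton.2 heq)
    grind
  have hqD : q ∉ D := fun h ↦ hpq.2 (hpD q h)
  have hDZ := Finset.le_card_sdiff Z D
  have hKZ := Finset.le_card_sdiff Z K
  refine isRainbowCopyThrough_of_apex (D := insert q (D \ Z)) (K := insert q (K \ Z)) hxy
    (by grind [hpq.ne]) (by grind) (by grind) (by grind) (by grind) ?_ (fun d hd ↦ ?_)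
    fun u hu v hv huv ↦ .inr (hmem u v (hqK (by grind) (by grind) huv) (by grind) (by grind))
  · exact (Set.injOn_insert fun h ↦ h.2 rfl).2
      ⟨hχG.mono (Set.sep_subset ..), fun ⟨e, he, heq⟩ ↦ he.2 heq⟩
  · obtain rfl | hd := Finset.mem_insert.1 hd
    · exact .inl rfl
    · exact .inr (hmem p d (hpD d (by grind)) hpZ (by grind))

/-- The graph witnessing the upper bound, for `D ⊆ K ⊆ M`: the vertices of `D` are joined to all
vertices, and the vertices of `K` are joined to those of `M`. Only the `#D` vertices of `D` have
unbounded degree. -/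
def coreGraph (D K M : Finset V) : SimpleGraph V :=
  fromRel fun u v ↦ u ∈ D ∨ u ∈ K ∧ v ∈ M

theorem coreGraph_adj : (coreGraph D K M).Adj p q ↔
    p ≠ q ∧ ((p ∈ D ∨ p ∈ K ∧ q ∈ M) ∨ q ∈ D ∨ q ∈ K ∧ p ∈ M) :=
  fromRel_adj ..

theorem ncard_edgeSet_coreGraph_le [Fintype V] :
    (coreGraph D K M).edgeSet.ncard ≤ #D * Fintype.card V + #K * #M := by
  classical
  have hsub : (coreGraph D K M).edgeSet ⊆
      ((D ×ˢ Finset.univ ∪ K ×ˢ M).image fun u : V × V ↦ s(u.1, u.2) : Finset (Sym2 V)) := by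
    rintro ⟨u, v⟩ he
    obtain ⟨-, h | h⟩ := coreGraph_adj.1 he
    · exact Finset.mem_image.2 ⟨(u, v), by simpa using h, rfl⟩
    · exact Finset.mem_image.2 ⟨(v, u), by simpa using h, Sym2.eq_swap⟩
  calc (coreGraph D K M).edgeSet.ncard
      ≤ #((D ×ˢ Finset.univ ∪ K ×ˢ M).image fun u : V × V ↦ s(u.1, u.2)) :=
        Set.ncard_le_ncard hsub (Finset.finite_toSet _) |>.trans_eq (Set.ncard_coe_finset _)
    _ ≤ #(D ×ˢ Finset.univ) + #(K ×ˢ M) := Finset.card_image_le.trans (Finset.card_union_le ..)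
    _ = #D * Fintype.card V + #K * #M := by simp [Finset.card_product]

theorem coreGraph_rainbowForced_of_mem [Finite V] (hxy : H.Adj x y)
    (hc : Set.InjOn c (coreGraph D K M).edgeSet) (hDK : D ⊆ K) (hKM : K ⊆ M)
    (hD : (H.neighborSet x).ncard ≤ #D) (hK : Fintype.card W ≤ #K) (hpq : p ≠ q) (hq : q ∈ M) :
    RainbowForced H (coreGraph D K M) c s(p, q) := by
  by_cases hadj : (coreGraph D K M).Adj p q
  · exact .of_mem hadj
  have hnadj := mt coreGraph_adj.2 hadj
  refine .of_isClique hxy hc hDK hD hK ?_ (by grind) (fun d hd ↦ ?_) ⟨hpq, hadj⟩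
  · intro u hu v hv huv
    rw [coreGraph_adj]
    grind
  · rw [coreGraph_adj]
    grind

theorem coreGraph_rainbowForced [Finite V] (hxy : H.Adj x y)
    (hc : Set.InjOn c (coreGraph D K M).edgeSet) (hDK : D ⊆ K) (hKM : K ⊆ M)
    (hD : (H.neighborSet x).ncard ≤ #D) (hK : Fintype.card W ≤ #K)
    (hM : #K + Fintype.card W ≤ #M) (hpq : p ≠ q) :
    RainbowForced H (coreGraph D K M) c s(p, q) := by
  classical
  have hforced {u v : V} (huv : u ≠ v) (hv : v ∈ M) :
      RainbowForced H (coreGraph D K M) c s(u, v) :=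
    coreGraph_rainbowForced_of_mem hxy hc hDK hKM hD hK huv hv
  by_cases hq : q ∈ M
  · exact hforced hpq hq
  by_cases hp : p ∈ M
  · exact Sym2.eq_swap ▸ hforced hpq.symm hp
  refine .of_isIndepSet (K := insert p (insert q (M \ K))) hxy ?_
    (by grind [Finset.le_card_sdiff K M]) (by simp) (by simp) hpq fun u hu v hv huv hne ↦ ?_
  · intro u hu v hv _
    rw [coreGraph_adj]
    grind
  · by_cases hvM : v ∈ M
    · exact hforced huv hvM
    · exact Sym2.eq_swap ▸ hforced huv.symm (by grind)

theorem rwsat_le_mul_add (hxy : H.Adj x y) (n : ℕ) :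
    rwsat H n ≤ (H.neighborSet x).ncard * n + 2 * Fintype.card W ^ 2 := by
  obtain hn | hn := lt_or_ge n (2 * Fintype.card W)
  · refine (rwsat_le_choose_two H n).trans ?_
    rw [Nat.choose_two_right]
    refine (Nat.div_le_of_le_mul ?_).trans (Nat.le_add_left ..)
    nlinarith [Nat.mul_le_mul_left n (Nat.sub_le n 1)]
  obtain ⟨M, -, hM⟩ := Finset.exists_subset_card_eq (s := (Finset.univ : Finset (Fin n)))
    (n := 2 * Fintype.card W) (by simpa)
  obtain ⟨K, hKM, hK⟩ := Finset.exists_subset_card_eq (s := M) (n := Fintype.card W) (by omega)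
  have hx : (H.neighborSet x).ncard ≤ Fintype.card W := by
    rw [← Nat.card_eq_fintype_card]
    exact Set.ncard_le_card _
  obtain ⟨D, hDK, hD⟩ := Finset.exists_subset_card_eq (hx.trans_eq hK.symm)
  obtain ⟨c, hc⟩ := Countable.exists_injective_nat (Sym2 (Fin n))
  have hforced : ∀ e ∈ (coreGraph D K M)ᶜ.edgeSet, RainbowForced H (coreGraph D K M) c e := by
    rintro ⟨p, q⟩ hpq
    exact coreGraph_rainbowForced hxy hc.injOn hDK hKM hD.ge hK.ge (by omega) hpq.1
  calc rwsat H n = rwsat H (Fintype.card (Fin n)) := by rw [Fintype.card_fin]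
    _ ≤ (coreGraph D K M).edgeSet.ncard := rwsat_card_le_ncard_edgeSet hforced
    _ ≤ #D * Fintype.card (Fin n) + #K * #M := ncard_edgeSet_coreGraph_le
    _ = (H.neighborSet x).ncard * n + 2 * Fintype.card W ^ 2 := by
      rw [hD, hK, hM, Fintype.card_fin]
      ring

end UpperBound

section Hubs

open scoped Finset

variable {V : Type*} {G : SimpleGraph V}

/-- A bounded set `T` of vertices, labelled by `ℓ` so that every label occurs at least `k` times,
which is independent and stays so when a vertex outside the bounded set `U` is added. Two graphs
are joined along the sets `U` of their hubs. -/
structure IsHub {δ : ℕ} (G : SimpleGraph V) (k : ℕ) (ℓ : V → ZMod δ) (T U : Finset V) : Prop where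
  subset : T ⊆ U
  isIndepSet_insert : ∀ v ∉ U, G.IsIndepSet (insert v (T : Set V))
  le_card_filter : ∀ j, k ≤ #{t ∈ T | ℓ t = j}

theorem card_le_two_mul_card_filter_degree_le [Fintype V] [DecidableRel G.Adj] {m : ℕ}
    (hG : G.edgeSet.ncard ≤ m * Fintype.card V) :
    Fintype.card V ≤ 2 * #{v | G.degree v ≤ 4 * m} := by
  classical
  have hsum : #{v | G.degree v ≤ 4 * m} + #{v | ¬G.degree v ≤ 4 * m} = Fintype.card V :=
    Finset.card_filter_add_card_filter_not _
  have hhigh : #{v | ¬G.degree v ≤ 4 * m} * (4 * m + 1) ≤ 2 * (m * Fintype.card V) :=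
    calc #{v | ¬G.degree v ≤ 4 * m} * (4 * m + 1)
        ≤ ∑ v with ¬G.degree v ≤ 4 * m, G.degree v :=
          Finset.card_nsmul_le_sum {v | ¬G.degree v ≤ 4 * m} (G.degree ·) _
            fun v hv ↦ not_le.1 (Finset.mem_filter.1 hv).2
      _ ≤ ∑ v, G.degree v := Finset.sum_le_sum_of_subset (Finset.filter_subset ..)
      _ = 2 * #G.edgeFinset := G.sum_degrees_eq_twice_card_edges
      _ ≤ 2 * (m * Fintype.card V) := by
          rw [← Set.ncard_coe_finset, coe_edgeFinset]
          exact Nat.mul_le_mul_left 2 hG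
  nlinarith

theorem isIndepSet_insert_of_notMem_biUnion [DecidableEq V] [G.LocallyFinite] {T : Finset V}
    {v : V} (hT : G.IsIndepSet T) (hv : v ∉ T.biUnion fun u ↦ insert u (G.neighborFinset u)) :
    G.IsIndepSet (insert v (T : Set V)) := by
  have : Std.Symm fun u v ↦ ¬G.Adj u v := ⟨fun _ _ h h' ↦ h h'.symm⟩
  exact Set.Pairwise.insert_of_symm hT fun u hu _ hvu ↦
    hv (Finset.mem_biUnion.2 ⟨u, hu, by simp [hvu.symm]⟩)

theorem card_biUnion_insert_neighborFinset_le [DecidableEq V] [G.LocallyFinite] {d : ℕ}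
    {T : Finset V} (hT : ∀ v ∈ T, G.degree v ≤ d) :
    #(T.biUnion fun v ↦ insert v (G.neighborFinset v)) ≤ #T * (d + 1) :=
  Finset.card_biUnion_le_card_mul _ _ _ fun v hv ↦
    (Finset.card_insert_le ..).trans (Nat.succ_le_succ (hT v hv))

theorem exists_isIndepSet_of_degree_le [G.LocallyFinite] {d : ℕ} {S : Finset V}
    (hS : ∀ v ∈ S, G.degree v ≤ d) {t : ℕ} (ht : t * (d + 1) ≤ #S) :
    ∃ T ⊆ S, #T = t ∧ G.IsIndepSet T := by
  classical
  induction t with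
  | zero => exact ⟨∅, by simp⟩
  | succ t ih =>
    obtain ⟨T, hTS, rfl, hT⟩ := ih (by lia)
    have hTd := card_biUnion_insert_neighborFinset_le fun v hv ↦ hS v (hTS hv)
    obtain ⟨v, hvS, hv⟩ := Finset.exists_mem_notMem_of_card_lt_card
      (show #(T.biUnion fun v ↦ insert v (G.neighborFinset v)) < #S by lia)
    refine ⟨insert v T, Finset.insert_subset hvS hTS, Finset.card_insert_of_notMem (by grind), ?_⟩
    rw [Finset.coe_insert]
    exact isIndepSet_insert_of_notMem_biUnion hT hv

theorem exists_label_le_card_filter {α : Type*} {δ k : ℕ} [NeZero δ] {T : Finset α}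
    (hT : #T = δ * k) : ∃ ℓ : α → ZMod δ, ∀ j, k ≤ #{t ∈ T | ℓ t = j} := by
  classical
  have e : T ≃ ZMod δ × Fin k := Fintype.equivOfCardEq (by simp [hT])
  let ℓ : α → ZMod δ := fun v ↦ if hv : v ∈ T then (e ⟨v, hv⟩).1 else 0
  refine ⟨ℓ, fun j ↦ ?_⟩
  calc k = #(Finset.univ : Finset (Fin k)) := by simp
    _ ≤ #{t ∈ T | ℓ t = j} := Finset.card_le_card_of_injOn (fun i ↦ e.symm (j, i))
      (fun i _ ↦ by simp [ℓ]) (fun i _ i' _ h ↦ by simpa using h)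

theorem exists_isHub [Fintype V] {δ k m : ℕ} [NeZero δ]
    (hG : G.edgeSet.ncard ≤ m * Fintype.card V)
    (hV : 2 * (δ * k * (4 * m + 1)) ≤ Fintype.card V) :
    ∃ (ℓ : V → ZMod δ) (T U : Finset V), IsHub G k ℓ T U ∧ #U ≤ δ * k * (4 * m + 1) := by
  classical
  have hlow := card_le_two_mul_card_filter_degree_le hG
  obtain ⟨T, hTlow, hTcard, hT⟩ := exists_isIndepSet_of_degree_le (G := G) (d := 4 * m)
    (t := δ * k) (S := {v | G.degree v ≤ 4 * m}) (by simp) (by lia)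
  obtain ⟨ℓ, hℓ⟩ := exists_label_le_card_filter hTcard
  refine ⟨ℓ, T, T.biUnion fun v ↦ insert v (G.neighborFinset v), ⟨?_, ?_, hℓ⟩, ?_⟩
  · exact fun v hv ↦ Finset.mem_biUnion.2 ⟨v, hv, Finset.mem_insert_self ..⟩
  · exact fun v ↦ isIndepSet_insert_of_notMem_biUnion hT
  · exact hTcard ▸ card_biUnion_insert_neighborFinset_le fun v hv ↦ by simpa using hTlow hv

end Hubs

section Join

open scoped Finset

variable {W V V' A B : Type*} {H : SimpleGraph W} {x y : W} {δ : ℕ}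

theorem RainbowForced.of_isHub [Fintype W] [Finite V'] {G : SimpleGraph V} {G' : SimpleGraph V'}
    {c : Sym2 V' → ℕ} {ℓ : V → ZMod δ} {T U : Finset V} {p : V'} {b : V} (hxy : H.Adj x y)
    (hx : (H.neighborSet x).ncard = δ) (hub : IsHub G (δ + Fintype.card W) ℓ T U) (φ : G ↪g G')
    (hforced : ∀ u v, u ≠ v → RainbowForced H G' c s(φ u, φ v)) (j : ZMod δ)
    (hpT : ∀ t ∈ T, G'.Adj p (φ t) ∧ c s(p, φ t) = (j + ℓ t).val) (hb : b ∉ U)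
    (hpb : G'ᶜ.Adj p (φ b)) : RainbowForced H G' c s(p, φ b) := by
  classical
  let ℓ' : V' → ZMod δ := Function.extend φ (fun v ↦ j + ℓ v) 0
  have hℓ' (v : V) : ℓ' (φ v) = j + ℓ v := φ.injective.extend_apply ..
  have himage : insert (φ b) ((T.map φ.toEmbedding : Finset V') : Set V') = φ '' insert b T := by
    simp [Set.image_insert_eq]
  refine .of_colorClasses (T := T.map φ.toEmbedding) (ℓ := ℓ') hxy hx (fun i ↦ ?_) ?_ hpb ?_ ?_
  · calc δ + Fintype.card W ≤ #{t ∈ T | ℓ t = i - j} := hub.le_card_filter _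
      _ = #{t ∈ T.map φ.toEmbedding | ℓ' t = i} := by
        simp [Finset.filter_map, hℓ', eq_sub_iff_add_eq']
  · simpa [hℓ'] using hpT
  · rw [himage]
    rintro _ ⟨u, hu, rfl⟩ _ ⟨v, hv, rfl⟩ huv
    exact mt φ.map_adj_iff.1 (hub.isIndepSet_insert b hb hu hv (ne_of_apply_ne φ huv))
  · rw [himage]
    rintro _ ⟨u, -, rfl⟩ _ ⟨v, -, rfl⟩ huv
    exact hforced u v (ne_of_apply_ne φ huv)

/-- The disjoint union of `G₁` and `G₂` with all edges between `S` and `T` added. -/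
def joinGraph (G₁ : SimpleGraph A) (G₂ : SimpleGraph B) (S : Finset A) (T : Finset B) :
    SimpleGraph (A ⊕ B) :=
  (G₁ ⊕g G₂) ⊔ fromEdgeSet ((fun u : A × B ↦ s(.inl u.1, .inr u.2)) '' (S ×ˢ T : Finset (A × B)))

/-- The coloring of a `joinGraph` by `c₁` and `c₂` within the parts, and by the residue of
`ℓ₁ a + ℓ₂ b` in `{0, …, δ - 1}` between them. Fixing either `a` or `b`, this is a translate of the
labelling of the other part. -/
def joinColoring (c₁ : Sym2 A → ℕ) (c₂ : Sym2 B → ℕ) (ℓ₁ : A → ZMod δ) (ℓ₂ : B → ZMod δ) :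
    Sym2 (A ⊕ B) → ℕ :=
  Sym2.lift ⟨fun
    | .inl a, .inl a' => c₁ s(a, a')
    | .inr b, .inr b' => c₂ s(b, b')
    | .inl a, .inr b => (ℓ₁ a + ℓ₂ b).val
    | .inr b, .inl a => (ℓ₁ a + ℓ₂ b).val, by
    rintro (a | b) (a' | b') <;> simp [Sym2.eq_swap]⟩

variable {G₁ : SimpleGraph A} {G₂ : SimpleGraph B} {c₁ : Sym2 A → ℕ} {c₂ : Sym2 B → ℕ}
  {ℓ₁ : A → ZMod δ} {ℓ₂ : B → ZMod δ} {S S' : Finset A} {T T' : Finset B} {a : A} {b : B}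

theorem joinGraph_adj_inl_inr : (joinGraph G₁ G₂ S T).Adj (.inl a) (.inr b) ↔ a ∈ S ∧ b ∈ T := by
  simp [joinGraph]

/-- The left part as an induced subgraph of the join. -/
def joinGraph.inl (G₁ : SimpleGraph A) (G₂ : SimpleGraph B) (S : Finset A) (T : Finset B) :
    G₁ ↪g joinGraph G₁ G₂ S T :=
  ⟨.inl, by simp [joinGraph]⟩

/-- The right part as an induced subgraph of the join. -/
def joinGraph.inr (G₁ : SimpleGraph A) (G₂ : SimpleGraph B) (S : Finset A) (T : Finset B) :
    G₂ ↪g joinGraph G₁ G₂ S T :=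
  ⟨.inr, by simp [joinGraph]⟩

theorem isIndepSet_joinGraph_disjSum {R : Finset A} (hR : G₁.IsIndepSet R) (hb : b ∉ T) :
    (joinGraph G₁ G₂ S T).IsIndepSet (R.disjSum {b} : Finset (A ⊕ B)) := by
  rintro (u | v) hu (u' | v') hu' hne hadj
  · exact hR (Finset.inl_mem_disjSum.1 hu) (Finset.inl_mem_disjSum.1 hu') (ne_of_apply_ne _ hne)
      ((joinGraph.inl ..).map_adj_iff.1 hadj)
  · have hv' := Finset.inr_mem_disjSum.1 hu'
    grind [joinGraph_adj_inl_inr]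
  · have hv := Finset.inr_mem_disjSum.1 hu
    have := joinGraph_adj_inl_inr.1 hadj.symm
    grind
  · simp_all

theorem ncard_edgeSet_joinGraph_le [Finite A] [Finite B] :
    (joinGraph G₁ G₂ S T).edgeSet.ncard ≤ G₁.edgeSet.ncard + G₂.edgeSet.ncard + #S * #T := by
  classical
  have hsum : (G₁ ⊕g G₂).edgeSet.ncard = G₁.edgeSet.ncard + G₂.edgeSet.ncard := by
    simpa [Nat.card_coe_set_eq] using Nat.card_congr (edgeSetSumEquiv (G := G₁) (H := G₂))
  rw [joinGraph, edgeSet_sup, ← hsum, edgeSet_fromEdgeSet, ← Finset.card_product,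
    ← Set.ncard_coe_finset]
  refine (Set.ncard_union_le ..).trans (Nat.add_le_add_left ?_ _)
  exact (Set.ncard_le_ncard Set.sdiff_subset).trans (Set.ncard_image_le)

theorem RainbowForced.of_ne {G : SimpleGraph V} {c : Sym2 V → ℕ} {u v : V}
    (h : ∀ e ∈ Gᶜ.edgeSet, RainbowForced H G c e) (huv : u ≠ v) : RainbowForced H G c s(u, v) := by
  by_cases hadj : G.Adj u v
  · exact .of_mem hadj
  · exact h _ ⟨huv, hadj⟩

theorem joinGraph_rainbowForced_inl_inl (h₁ : ∀ e ∈ G₁ᶜ.edgeSet, RainbowForced H G₁ c₁ e) {a a' : A}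
    (ha : a ≠ a') :
    RainbowForced H (joinGraph G₁ G₂ S T) (joinColoring c₁ c₂ ℓ₁ ℓ₂) s(.inl a, .inl a') :=
  (RainbowForced.of_ne h₁ ha).map (joinGraph.inl G₁ G₂ S T) (by rintro ⟨u, v⟩ -; rfl)

theorem joinGraph_rainbowForced_inr_inr (h₂ : ∀ e ∈ G₂ᶜ.edgeSet, RainbowForced H G₂ c₂ e) {b b' : B}
    (hb : b ≠ b') :
    RainbowForced H (joinGraph G₁ G₂ S T) (joinColoring c₁ c₂ ℓ₁ ℓ₂) s(.inr b, .inr b') :=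
  (RainbowForced.of_ne h₂ hb).map (joinGraph.inr G₁ G₂ S T) (by rintro ⟨u, v⟩ -; rfl)

theorem joinGraph_rainbowForced_of_mem_left [Fintype W] [Finite A] [Finite B] (hxy : H.Adj x y)
    (hx : (H.neighborSet x).ncard = δ) (h₂ : ∀ e ∈ G₂ᶜ.edgeSet, RainbowForced H G₂ c₂ e)
    (hub : IsHub G₂ (δ + Fintype.card W) ℓ₂ T' T) (ha : a ∈ S) (hb : b ∉ T) :
    RainbowForced H (joinGraph G₁ G₂ S T) (joinColoring c₁ c₂ ℓ₁ ℓ₂) s(.inl a, .inr b) :=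
  .of_isHub hxy hx hub (joinGraph.inr G₁ G₂ S T) (fun _ _ ↦ joinGraph_rainbowForced_inr_inr h₂)
    (ℓ₁ a) (fun _ ht ↦ ⟨joinGraph_adj_inl_inr.2 ⟨ha, hub.subset ht⟩, rfl⟩) hb
    ⟨Sum.inl_ne_inr, fun h ↦ hb (joinGraph_adj_inl_inr.1 h).2⟩

theorem joinGraph_rainbowForced_of_mem_right [Fintype W] [Finite A] [Finite B] (hxy : H.Adj x y)
    (hx : (H.neighborSet x).ncard = δ) (h₁ : ∀ e ∈ G₁ᶜ.edgeSet, RainbowForced H G₁ c₁ e)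
    (hub : IsHub G₁ (δ + Fintype.card W) ℓ₁ S' S) (ha : a ∉ S) (hb : b ∈ T) :
    RainbowForced H (joinGraph G₁ G₂ S T) (joinColoring c₁ c₂ ℓ₁ ℓ₂) s(.inl a, .inr b) :=
  Sym2.eq_swap ▸ .of_isHub hxy hx hub (joinGraph.inl G₁ G₂ S T)
    (fun _ _ ↦ joinGraph_rainbowForced_inl_inl h₁) (ℓ₂ b)
    (fun t ht ↦ ⟨(joinGraph_adj_inl_inr.2 ⟨hub.subset ht, hb⟩).symm,
      congrArg ZMod.val (add_comm (ℓ₁ t) (ℓ₂ b))⟩) ha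
    ⟨Sum.inr_ne_inl, fun h ↦ ha (joinGraph_adj_inl_inr.1 h.symm).1⟩

theorem joinGraph_rainbowForced_inl_inr [Fintype W] [Finite A] [Finite B] (hxy : H.Adj x y)
    (hx : (H.neighborSet x).ncard = δ) (h₁ : ∀ e ∈ G₁ᶜ.edgeSet, RainbowForced H G₁ c₁ e)
    (h₂ : ∀ e ∈ G₂ᶜ.edgeSet, RainbowForced H G₂ c₂ e)
    (hub₁ : IsHub G₁ (δ + Fintype.card W) ℓ₁ S' S) (hub₂ : IsHub G₂ (δ + Fintype.card W) ℓ₂ T' T) :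
    RainbowForced H (joinGraph G₁ G₂ S T) (joinColoring c₁ c₂ ℓ₁ ℓ₂) s(.inl a, .inr b) := by
  classical
  have : NeZero δ := ⟨hx ▸ Set.ncard_ne_zero_of_mem hxy⟩
  by_cases ha : a ∈ S <;> by_cases hb : b ∈ T
  · exact .of_mem (joinGraph_adj_inl_inr.2 ⟨ha, hb⟩)
  · exact joinGraph_rainbowForced_of_mem_left hxy hx h₂ hub₂ ha hb
  · exact joinGraph_rainbowForced_of_mem_right hxy hx h₁ hub₁ ha hb
  have hW : Fintype.card W ≤ #S' :=
    (Nat.le_add_left ..).trans ((hub₁.le_card_filter 0).trans (Finset.card_filter_le ..))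
  refine .of_isIndepSet (K := (insert a S').disjSum {b}) hxy (isIndepSet_joinGraph_disjSum
    (by simpa using hub₁.isIndepSet_insert a ha) hb) ?_ (by simp) (by simp) Sum.inl_ne_inr ?_
  · have := Finset.card_le_card (Finset.subset_insert a S')
    grind [Finset.card_disjSum]
  have hcross {u : A} {v : B} (hu : u ∈ insert a S') (hv : v ∈ ({b} : Finset B))
      (hne : s(.inl u, .inr v) ≠ (s(.inl a, .inr b) : Sym2 (A ⊕ B))) :
      RainbowForced H (joinGraph G₁ G₂ S T) (joinColoring c₁ c₂ ℓ₁ ℓ₂) s(.inl u, .inr v) := by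
    rw [Finset.mem_singleton.1 hv] at hne ⊢
    have huS' : u ∈ S' := (Finset.mem_insert.1 hu).resolve_left fun h ↦ hne (h ▸ rfl)
    exact joinGraph_rainbowForced_of_mem_left hxy hx h₂ hub₂ (hub₁.subset huS') hb
  rintro (u | v) hu (u' | v') hu' huv hne
  · exact joinGraph_rainbowForced_inl_inl h₁ (ne_of_apply_ne _ huv)
  · exact hcross (Finset.inl_mem_disjSum.1 hu) (Finset.inr_mem_disjSum.1 hu') hne
  · rw [Sym2.eq_swap] at hne ⊢
    exact hcross (Finset.inl_mem_disjSum.1 hu') (Finset.inr_mem_disjSum.1 hu) hne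
  · exact joinGraph_rainbowForced_inr_inr h₂ (ne_of_apply_ne _ huv)

theorem joinGraph_rainbowForced [Fintype W] [Finite A] [Finite B] (hxy : H.Adj x y)
    (hx : (H.neighborSet x).ncard = δ) (h₁ : ∀ e ∈ G₁ᶜ.edgeSet, RainbowForced H G₁ c₁ e)
    (h₂ : ∀ e ∈ G₂ᶜ.edgeSet, RainbowForced H G₂ c₂ e)
    (hub₁ : IsHub G₁ (δ + Fintype.card W) ℓ₁ S' S) (hub₂ : IsHub G₂ (δ + Fintype.card W) ℓ₂ T' T) :
    ∀ e ∈ (joinGraph G₁ G₂ S T)ᶜ.edgeSet,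
      RainbowForced H (joinGraph G₁ G₂ S T) (joinColoring c₁ c₂ ℓ₁ ℓ₂) e := by
  refine Sym2.forall.2 ?_
  rintro (a | b) (a' | b') he
  · exact joinGraph_rainbowForced_inl_inl h₁ (ne_of_apply_ne _ he.1)
  · exact joinGraph_rainbowForced_inl_inr hxy hx h₁ h₂ hub₁ hub₂
  · rw [Sym2.eq_swap]
    exact joinGraph_rainbowForced_inl_inr hxy hx h₁ h₂ hub₁ hub₂
  · exact joinGraph_rainbowForced_inr_inr h₂ (ne_of_apply_ne _ he.1)

theorem exists_rainbowForced_isHub [Finite W] (hxy : H.Adj x y)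
    (hx : (H.neighborSet x).ncard = δ) (k : ℕ) :
    ∃ N C, ∀ n ≥ N, ∃ (G : SimpleGraph (Fin n)) (c : Sym2 (Fin n) → ℕ) (ℓ : Fin n → ZMod δ)
      (T U : Finset (Fin n)), (∀ e ∈ Gᶜ.edgeSet, RainbowForced H G c e) ∧
        G.edgeSet.ncard = rwsat H n ∧ IsHub G k ℓ T U ∧ #U ≤ C := by
  have := Fintype.ofFinite W
  have : NeZero δ := ⟨hx ▸ Set.ncard_ne_zero_of_mem hxy⟩
  let C := δ * k * (4 * (δ + 1) + 1)
  refine ⟨2 * C + 2 * Fintype.card W ^ 2, C, fun n hn ↦ ?_⟩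
  obtain ⟨G, c, hforced, hcard⟩ := exists_forall_rainbowForced_ncard_eq_rwsat H n
  have hle : rwsat H n ≤ (δ + 1) * n := by
    have := hx ▸ rwsat_le_mul_add hxy n
    lia
  obtain ⟨ℓ, T, U, hub, hU⟩ := exists_isHub (G := G) (δ := δ) (k := k) (m := δ + 1)
    (by rwa [hcard, Fintype.card_fin]) (by rw [Fintype.card_fin]; lia)
  exact ⟨G, c, ℓ, T, U, hforced, hcard, hub, hU⟩

theorem exists_rwsat_add_le [Finite W] (hxy : H.Adj x y) :
    ∃ N C, ∀ n ≥ N, ∀ m ≥ N, rwsat H (n + m) ≤ rwsat H n + rwsat H m + C := by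
  have := Fintype.ofFinite W
  obtain ⟨N, C, h⟩ := exists_rainbowForced_isHub hxy rfl ((H.neighborSet x).ncard + Fintype.card W)
  refine ⟨N, C * C, fun n hn m hm ↦ ?_⟩
  obtain ⟨G₁, c₁, ℓ₁, S', S, h₁, hcard₁, hub₁, hS⟩ := h n hn
  obtain ⟨G₂, c₂, ℓ₂, T', T, h₂, hcard₂, hub₂, hT⟩ := h m hm
  calc rwsat H (n + m) = rwsat H (Fintype.card (Fin n ⊕ Fin m)) := by simp
    _ ≤ (joinGraph G₁ G₂ S T).edgeSet.ncard :=
      rwsat_card_le_ncard_edgeSet (joinGraph_rainbowForced hxy rfl h₁ h₂ hub₁ hub₂)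
    _ ≤ rwsat H n + rwsat H m + #S * #T := hcard₁ ▸ hcard₂ ▸ ncard_edgeSet_joinGraph_le
    _ ≤ rwsat H n + rwsat H m + C * C := Nat.add_le_add_left (Nat.mul_le_mul hS hT) _

end Join

section Fekete

open Filter Topology

variable {u : ℕ → ℝ} {N : ℕ}

theorem apply_mul_add_le (hu : ∀ m ≥ N, ∀ n ≥ N, u (m + n) ≤ u m + u n) {n r : ℕ} (hn : N ≤ n)
    (hr : N ≤ r) (k : ℕ) : u (n * k + r) ≤ u r + u n * k := by
  induction k with
  | zero => simp
  | succ k ih =>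
    calc u (n * (k + 1) + r) = u (n + (n * k + r)) := by ring_nf
      _ ≤ u n + u (n * k + r) := hu n hn _ (hr.trans (Nat.le_add_left ..))
      _ ≤ u n + (u r + u n * k) := by gcongr
      _ = u r + u n * (k + 1 : ℕ) := by push_cast; ring

theorem eventually_div_lt_of_div_lt (hu : ∀ m ≥ N, ∀ n ≥ N, u (m + n) ≤ u m + u n) {n : ℕ}
    (hn : N ≤ n) (hn0 : n ≠ 0) {L : ℝ} (hL : u n / n < L) : ∀ᶠ p in atTop, u p / p < L := by
  refine .atTop_of_arithmetic hn0 fun r _ ↦ ?_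
  -- The residue `r` may lie below `N`; the first `N` terms of the progression are skipped.
  have hr : N ≤ n * N + r := by nlinarith [Nat.pos_of_ne_zero hn0]
  have hlim : Tendsto (fun k : ℕ ↦ (u (n * N + r) + u n * k) / ((n * N + r : ℕ) + n * k : ℝ))
      atTop (𝓝 (u n / n)) :=
    tendsto_add_mul_div_add_mul_atTop_nhds _ _ _ (Nat.cast_ne_zero.2 hn0)
  have hshift : ∀ᶠ k in atTop, u (n * (k + N) + r) / (n * (k + N) + r : ℕ) < L := by
    filter_upwards [hlim.eventually_lt_const hL] with k hk
    refine lt_of_le_of_lt ?_ hk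
    rw [mul_add, add_assoc, Nat.cast_add, Nat.cast_mul, add_comm (n * k : ℝ)]
    gcongr
    exact apply_mul_add_le hu hn hr k
  rwa [← map_add_atTop_eq_nat N, eventually_map]

theorem exists_tendsto_div_of_add_le (hu : ∀ m ≥ N, ∀ n ≥ N, u (m + n) ≤ u m + u n)
    (hbdd : BddBelow (Set.range fun n : ℕ ↦ u n / n)) :
    ∃ L, Tendsto (fun n : ℕ ↦ u n / n) atTop (𝓝 L) := by
  set S : Set ℝ := (fun n : ℕ ↦ u n / n) '' Set.Ici (N + 1)
  have hS : BddBelow S := hbdd.mono (Set.image_subset_range _ _)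
  refine ⟨sInf S, tendsto_order.2 ⟨fun l hl ↦ ?_, fun L hL ↦ ?_⟩⟩
  · filter_upwards [eventually_ge_atTop (N + 1)] with n hn
    exact hl.trans_le (csInf_le hS ⟨n, hn, rfl⟩)
  · obtain ⟨_, ⟨n, hn, rfl⟩, hnL⟩ := exists_lt_of_csInf_lt (Set.nonempty_Ici.image _) hL
    have hn : N + 1 ≤ n := hn
    exact eventually_div_lt_of_div_lt hu (by lia) (by lia) hnL

theorem exists_tendsto_div_of_add_le_add_const {f : ℕ → ℕ} {C : ℕ}
    (hf : ∀ m ≥ N, ∀ n ≥ N, f (m + n) ≤ f m + f n + C) :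
    ∃ L, Tendsto (fun n : ℕ ↦ (f n : ℝ) / n) atTop (𝓝 L) := by
  have hadd : ∀ m ≥ N, ∀ n ≥ N, ((f (m + n) + C : ℕ) : ℝ) ≤ (f m + C : ℕ) + (f n + C : ℕ) := by
    intro m hm n hn
    exact_mod_cast (by linarith [hf m hm n hn] : f (m + n) + C ≤ (f m + C) + (f n + C))
  obtain ⟨L, hL⟩ := exists_tendsto_div_of_add_le (u := fun n ↦ ((f n + C : ℕ) : ℝ)) hadd
    ⟨0, Set.forall_mem_range.2 fun n ↦ by positivity⟩
  refine ⟨L, ?_⟩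
  simpa [add_div] using hL.sub (tendsto_const_div_atTop_nhds_zero_nat (C : ℝ))

theorem le_of_tendsto_div_of_le_mul_add {f : ℕ → ℕ} {a b : ℕ} {L : ℝ}
    (hL : Tendsto (fun n : ℕ ↦ (f n : ℝ) / n) atTop (𝓝 L)) (hf : ∀ n, f n ≤ a * n + b) :
    L ≤ a := by
  have hlim : Tendsto (fun n : ℕ ↦ (a : ℝ) + (b : ℝ) / n) atTop (𝓝 a) := by
    simpa using (tendsto_const_div_atTop_nhds_zero_nat (b : ℝ)).const_add (a : ℝ)
  refine le_of_tendsto_of_tendsto hL hlim ?_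
  filter_upwards [eventually_gt_atTop 0] with n hn
  rw [div_le_iff₀ (by positivity), add_mul, div_mul_cancel₀ _ (by positivity)]
  exact_mod_cast hf n

end Fekete

/-- If the non-empty graph `H` contains no pendant edge, then the limit `L` of
`rwsat(n, H) / n` satisfies `δ'(H) / 2 ≤ L ≤ δ'(H)`. -/
theorem rwsat_limit_bounds_of_no_pendant {W : Type*} [Fintype W] (H : SimpleGraph W)
    (hH : H.edgeSet.Nonempty)
    (hpend : ∀ u v, H.Adj u v → (H.neighborSet v).ncard ≠ 1) :
    ∃ L : ℝ, Filter.Tendsto (fun n : ℕ => (rwsat H n : ℝ) / n) Filter.atTop (nhds L) ∧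
      (minPosDeg H : ℝ) / 2 ≤ L ∧ L ≤ (minPosDeg H : ℝ) := by
  obtain ⟨x, y, hxy, hx⟩ := exists_adj_ncard_neighborSet_eq_minPosDeg hH
  obtain ⟨N, C, hadd⟩ := exists_rwsat_add_le hxy
  obtain ⟨L, hL⟩ := exists_tendsto_div_of_add_le_add_const hadd
  refine ⟨L, hL, ge_of_tendsto hL ?_, le_of_tendsto_div_of_le_mul_add hL
    fun n ↦ hx ▸ rwsat_le_mul_add hxy n⟩
  filter_upwards [Filter.eventually_gt_atTop (minPosDeg H)] with n hn
  have hlower : (minPosDeg H : ℝ) * n ≤ 2 * rwsat H n := by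
    exact_mod_cast minPosDeg_mul_le_two_mul_rwsat (two_le_minPosDeg hH hpend) hn
  have hn0 : (0 : ℝ) < n := by exact_mod_cast pos_of_gt hn
  rw [div_le_div_iff₀ two_pos hn0]
  linarith
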